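/- arXiv:2403.00390 — 7 statements merged into one kernel-verified Lean document; each statement's English description precedes it below -/
import Mathlib

section
/- Let a_1, …, a_k and T be even integers. Let A₁ be the DWA over Σ = {0,1} with states q_0, …, q_{k+1}, initial state q_0, transitions δ(q_i, x) = q_{i+1} for i < k and δ(q_k, x) = δ(q_{k+1}, x) = q_{k+1} for both letters x, and weights c(q_i, 1) = a_{i+1} and c(q_i, 0) = 0 for i < k, c(q_k, x) = −T for both letters, and c(q_{k+1}, x) = 0 for both letters. Let A₂ be identical to A₁ except that c(q_k, x) = −T + 1 for both letters. Then the following are equivalent: (1) for every nonempty word w over {0,1}, A₁(w) > 0 if and only if A₂(w) > 0; (2) there is no subset I ⊆ {1, …, k} with Σ_{i∈I} a_i = T. -/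
/-- A deterministic weighted automaton (DWA) over alphabet `A` with state space `Q`. -/
structure DWA (A : Type) (Q : Type) where
  init : Q
  δ : Q → A → Q
  c : Q → A → ℤ

/-- The extended transition function `δ̂`. -/
def DWA.run {A Q : Type} (M : DWA A Q) (q : Q) (w : List A) : Q :=
  w.foldl M.δ q

/-- The accumulated weight of the run on `w` starting in state `q`. -/
def DWA.valFrom {A Q : Type} (M : DWA A Q) : Q → List A → ℤ
  | _, [] => 0
  | q, x :: w => M.c q x + M.valFrom (M.δ q x) w

/-- The value `A(w)` of a word: the sum of the weights along the run from the initial state. -/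
def DWA.val {A Q : Type} (M : DWA A Q) (w : List A) : ℤ :=
  M.valFrom M.init w

/-!
Every run visits `q₀, q₁, …, q_k, q_{k+1}, q_{k+1}, …` whatever the letters are, so a word `w` of
length greater than `k` has value `∑ i ∈ I, a i + t`, where `I` is the set of those `i < k` for
which the letter at position `i` is `1` and `t` is the weight at `q_k`; shorter words never pay `t`.
For an integer `S`, exactly one of `S - T` and `S - T + 1` is positive if and only if `S = T`, and
every `I` is obtained from some word.
-/

namespace DWA

open Finset

theorem valFrom_eq_sum_range_of_forall_δ_eq {A Q : Type} (M : DWA A Q) (s : ℕ → Q)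
    (hδ : ∀ i x, M.δ (s i) x = s (i + 1)) (n : ℕ) (hc : ∀ i, n ≤ i → ∀ x, M.c (s i) x = 0)
    (w : List A) :
    M.valFrom (s 0) w = ∑ i ∈ range n, w[i]?.elim 0 (M.c (s i)) := by
  induction w generalizing s n with
  | nil => simp [valFrom]
  | cons x w ih =>
    have tail (m : ℕ) (hm : n ≤ m + 1) :
        M.valFrom (s 1) w = ∑ i ∈ range m, w[i]?.elim 0 (M.c (s (i + 1))) :=
      ih (fun i => s (i + 1)) (fun i => hδ (i + 1)) m fun i hi => hc (i + 1) (by omega)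
    rw [valFrom, hδ]
    cases n with
    | zero => simp [tail 0, hc 0]
    | succ n => simp [tail n, sum_range_succ', add_comm]

/-- The automaton of the reduction from subset sum, with the weight of the state `q_k` as a
parameter `t`; the two automata that are compared have `t = -T` and `t = -T + 1`. -/
def subsetSum {k : ℕ} (a : Fin k → ℤ) (t : ℤ) : DWA Bool (Fin (k + 2)) where
  init := 0
  δ j _ := Fin.clamp (j + 1) (k + 1)
  c j x := if h : j.val < k then (if x then a ⟨j, h⟩ else 0) else if j.val = k then t else 0

/-- The subset of `Fin k` encoded by the first `k` letters of a word; positions beyond the end of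
the word count as not selected. -/
def selectedIndices (k : ℕ) (w : List Bool) : Finset (Fin k) :=
  {i | w[i.val]? = some true}

theorem exists_lt_length_and_selectedIndices_eq {k : ℕ} (I : Finset (Fin k)) :
    ∃ w : List Bool, k < w.length ∧ selectedIndices k w = I := by
  refine ⟨List.ofFn (fun i => decide (i ∈ I)) ++ [false], by simp, ?_⟩
  ext i
  simp [selectedIndices]

section SubsetSum

variable {k : ℕ} (a : Fin k → ℤ)

theorem subsetSum_val (t : ℤ) (w : List Bool) :
    (subsetSum a t).val w =
      ∑ i ∈ selectedIndices k w, a i + if k < w.length then t else 0 := by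
  let q : ℕ → Fin (k + 2) := fun i => Fin.clamp i (k + 1)
  have step (i : ℕ) (x : Bool) : (subsetSum a t).δ (q i) x = q (i + 1) := by
    ext
    simp [subsetSum, q]
  have sink (i : ℕ) (hi : k + 1 ≤ i) (x : Bool) : (subsetSum a t).c (q i) x = 0 := by
    simp [subsetSum, q, hi]
  have selected (i : Fin k) : w[i.val]?.elim 0 ((subsetSum a t).c (q i)) =
      if w[i.val]? = some true then a i else 0 := by
    have hi : min i.val (k + 1) = i := by omega
    rcases w[i.val]? with _ | _ | _ <;> simp [subsetSum, q, hi]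
  have final : w[k]?.elim 0 ((subsetSum a t).c (q k)) = if k < w.length then t else 0 := by
    split_ifs with h <;> simp [subsetSum, q, h]
  calc (subsetSum a t).valFrom (q 0) w
    _ = ∑ i ∈ range (k + 1), w[i]?.elim 0 ((subsetSum a t).c (q i)) :=
      valFrom_eq_sum_range_of_forall_δ_eq _ q step _ sink w
    _ = ∑ i : Fin k, w[i.val]?.elim 0 ((subsetSum a t).c (q i)) +
          w[k]?.elim 0 ((subsetSum a t).c (q k)) := by
      rw [sum_range_succ, sum_range]
    _ = ∑ i ∈ selectedIndices k w, a i + if k < w.length then t else 0 := by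
      simp only [selected, final, selectedIndices, sum_filter]

theorem subsetSum_pos_iff_pos_iff_sum_ne (T : ℤ) (w : List Bool) :
    (0 < (subsetSum a (-T)).val w ↔ 0 < (subsetSum a (-T + 1)).val w) ↔
      (k < w.length → ∑ i ∈ selectedIndices k w, a i ≠ T) := by
  simp only [subsetSum_val]
  split_ifs <;> omega

end SubsetSum

end DWA

open DWA in
theorem subset_sum_reduction_correct_general {k : ℕ} (a : Fin k → ℤ) (T : ℤ) :
    (∀ w : List Bool, w ≠ [] →
      (0 < (subsetSum a (-T)).val w ↔ 0 < (subsetSum a (-T + 1)).val w)) ↔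
      ¬ ∃ I : Finset (Fin k), ∑ i ∈ I, a i = T := by
  constructor
  · rintro agree ⟨I, hI⟩
    obtain ⟨w, hw, rfl⟩ := exists_lt_length_and_selectedIndices_eq I
    have hne : w ≠ [] := List.ne_nil_of_length_pos (Nat.zero_lt_of_lt hw)
    exact (subsetSum_pos_iff_pos_iff_sum_ne a T w).1 (agree w hne) hw hI
  · exact fun noSolution w _ =>
      (subsetSum_pos_iff_pos_iff_sum_ne a T w).2 fun _ hT => noSolution ⟨_, hT⟩

/-- correctness of the reduction from subset sum to (in)equivalence of binary
PODWA. The letters `0, 1` are modelled by `false, true`; state `q_j` is `(⟨j, _⟩ : Fin (k+2))`. -/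
theorem subset_sum_reduction_correct (k : ℕ) (a : Fin k → ℤ) (T : ℤ)
    (ha : ∀ i, Even (a i)) (hT : Even T) :
    let δ : Fin (k + 2) → Bool → Fin (k + 2) := fun j _ => ⟨min (j.val + 1) (k + 1), by omega⟩
    let c₁ : Fin (k + 2) → Bool → ℤ := fun j x =>
      if h : j.val < k then (if x then a ⟨j.val, h⟩ else 0)
      else if j.val = k then -T else 0
    let c₂ : Fin (k + 2) → Bool → ℤ := fun j x =>
      if h : j.val < k then (if x then a ⟨j.val, h⟩ else 0)
      else if j.val = k then -T + 1 else 0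
    let A₁ : DWA Bool (Fin (k + 2)) := ⟨⟨0, by omega⟩, δ, c₁⟩
    let A₂ : DWA Bool (Fin (k + 2)) := ⟨⟨0, by omega⟩, δ, c₂⟩
    ((∀ w : List Bool, w ≠ [] → (0 < A₁.val w ↔ 0 < A₂.val w)) ↔
      ¬ ∃ I : Finset (Fin k), ∑ i ∈ I, a i = T) := by
  exact subset_sum_reduction_correct_general a T
end

section
/- Let A₁ = (Σ, Q₁, q₀₁, δ₁, c₁) and A₂ = (Σ, Q₂, q₀₂, δ₂, c₂) be DWAs over the same finite alphabet Σ, and let λ₁, λ₂ ∈ ℤ. Define the 2-dimensional ℤ-VASS V with states Q₁ × Q₂ ∪ {t} and the following labeled edges: for each (q, s) ∈ Q₁ × Q₂ and a ∈ Σ, an edge from (q, s) to (δ₁(q, a), δ₂(s, a)) labeled (c₁(q, a), c₂(s, a)); for each (q, s) ∈ Q₁ × Q₂, an edge from (q, s) to t labeled (−λ₁ + 1, −λ₂); and self-loops at t labeled (1, 0) and (0, −1). Then the configuration (t, (0, 0)) is reachable from the configuration ((q₀₁, q₀₂), (0, 0)) if and only if there exists a word w ∈ Σ* (with the convention A(ε)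 = 0) such that A₁(w) < λ₁ and A₂(w) ≥ λ₂. -/
/-!
The product states read a word and accumulate both of its values exactly; the sink loops only
increase the first counter and decrease the second, each by any amount. The two phases are joined
by a single edge, so `(t, v)` is reachable exactly when some word brings the counters to a `u` with
`u.1 ≤ v.1` and `v.2 ≤ u.2` on entering `t`. The strict bound `M₁.val w < lam₁` is the integer
inequality `M₁.val w - lam₁ + 1 ≤ 0`, which explains the `+ 1` in the label of the joining edge.
-/

/-- A ℤ-VASS with states `V` and counter values in `G` (`ℤ × ℤ` in dimension two), given by its
labelled edge relation. -/
structure ZVASS (V G : Type*) where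
  Edge : V → G → V → Prop

namespace ZVASS

variable {V G : Type*}

/-- The one-step relation on configurations; counters are not constrained to stay nonnegative. -/
def Step [Add G] (S : ZVASS V G) (p p' : V × G) : Prop :=
  ∃ x, S.Edge p.1 x p'.1 ∧ p'.2 = p.2 + x

/-- Reachability between configurations. -/
abbrev Reaches [Add G] (S : ZVASS V G) : V × G → V × G → Prop :=
  Relation.ReflTransGen S.Step

theorem Edge.step [Add G] {S : ZVASS V G} {p p' : V} {x : G} (h : S.Edge p x p') (u : G) :
    S.Step (p, u) (p', u + x) :=
  ⟨x, h, rfl⟩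

theorem Edge.reaches_nsmul [AddMonoid G] {S : ZVASS V G} {p : V} {x : G} (h : S.Edge p x p)
    (u : G) (n : ℕ) : S.Reaches (p, u) (p, u + n • x) := by
  induction n with
  | zero => simpa only [zero_nsmul, add_zero] using Relation.ReflTransGen.refl
  | succ n ih => simpa only [succ_nsmul, add_assoc] using ih.tail (Edge.step h _)

end ZVASS

namespace DWA

variable {A Q₁ Q₂ : Type}

/-- The edges of the reduction from word-threshold queries on two automata to ℤ-reachability, with
`Sum.inr ()` as the sink `t`. -/
inductive ThresholdEdge (M₁ : DWA A Q₁) (M₂ : DWA A Q₂) (lam₁ lam₂ : ℤ) :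
    (Q₁ × Q₂) ⊕ Unit → ℤ × ℤ → (Q₁ × Q₂) ⊕ Unit → Prop
  | read (q : Q₁) (s : Q₂) (a : A) :
      ThresholdEdge M₁ M₂ lam₁ lam₂ (.inl (q, s)) (M₁.c q a, M₂.c s a)
        (.inl (M₁.δ q a, M₂.δ s a))
  | enterSink (q : Q₁) (s : Q₂) :
      ThresholdEdge M₁ M₂ lam₁ lam₂ (.inl (q, s)) (-lam₁ + 1, -lam₂) (.inr ())
  | incFst : ThresholdEdge M₁ M₂ lam₁ lam₂ (.inr ()) (1, 0) (.inr ())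
  | decSnd : ThresholdEdge M₁ M₂ lam₁ lam₂ (.inr ()) (0, -1) (.inr ())

/-- The 2-dimensional ℤ-VASS of the reduction: it asks for a word `w` with `M₁.val w < lam₁` and
`lam₂ ≤ M₂.val w`. -/
def thresholdVASS (M₁ : DWA A Q₁) (M₂ : DWA A Q₂) (lam₁ lam₂ : ℤ) :
    ZVASS ((Q₁ × Q₂) ⊕ Unit) (ℤ × ℤ) where
  Edge := ThresholdEdge M₁ M₂ lam₁ lam₂

variable (M₁ : DWA A Q₁) (M₂ : DWA A Q₂) (lam₁ lam₂ : ℤ)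

theorem thresholdVASS_step_iff (p p' : ((Q₁ × Q₂) ⊕ Unit) × ℤ × ℤ) :
    (thresholdVASS M₁ M₂ lam₁ lam₂).Step p p' ↔
      (∃ (q : Q₁) (s : Q₂) (x : A), p.1 = Sum.inl (q, s) ∧
        p' = (Sum.inl (M₁.δ q x, M₂.δ s x), p.2.1 + M₁.c q x, p.2.2 + M₂.c s x)) ∨
      (∃ (q : Q₁) (s : Q₂), p.1 = Sum.inl (q, s) ∧
        p' = (Sum.inr (), p.2.1 + (-lam₁ + 1), p.2.2 + (-lam₂))) ∨
      (p.1 = Sum.inr () ∧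
        (p' = (Sum.inr (), p.2.1 + 1, p.2.2) ∨
          p' = (Sum.inr (), p.2.1, p.2.2 + (-1)))) := by
  obtain ⟨v, x, y⟩ := p
  obtain ⟨v', u'⟩ := p'
  constructor
  · rintro ⟨z, hedge : ThresholdEdge M₁ M₂ lam₁ lam₂ v z v', hu : u' = (x, y) + z⟩
    subst hu
    cases hedge with
    | read q s a => exact .inl ⟨q, s, a, rfl, rfl⟩
    | enterSink q s => exact .inr (.inl ⟨q, s, rfl, rfl⟩)
    | incFst => exact .inr (.inr ⟨rfl, .inl (by simp)⟩)
    | decSnd => exact .inr (.inr ⟨rfl, .inr (by simp)⟩)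
  · rintro (⟨q, s, a, rfl : v = _, h⟩ | ⟨q, s, rfl : v = _, h⟩ | ⟨rfl : v = _, h | h⟩) <;>
      obtain ⟨rfl, rfl⟩ := Prod.mk.inj h
    · exact ⟨_, ThresholdEdge.read q s a, rfl⟩
    · exact ⟨_, ThresholdEdge.enterSink q s, rfl⟩
    · exact ⟨_, ThresholdEdge.incFst, by simp⟩
    · exact ⟨_, ThresholdEdge.decSnd, by simp⟩

theorem thresholdVASS_reaches_sink_sink_iff (u v : ℤ × ℤ) :
    (thresholdVASS M₁ M₂ lam₁ lam₂).Reaches (.inr (), u) (.inr (), v) ↔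
      u.1 ≤ v.1 ∧ v.2 ≤ u.2 := by
  constructor
  · intro h
    generalize hp : ((.inr (), u) : ((Q₁ × Q₂) ⊕ Unit) × ℤ × ℤ) = p at h
    induction h using Relation.ReflTransGen.head_induction_on generalizing u with
    | refl => cases hp; exact ⟨le_rfl, le_rfl⟩
    | @head _ p' hstep _ ih =>
      subst hp
      obtain ⟨v', u'⟩ := p'
      obtain ⟨x, hedge : ThresholdEdge M₁ M₂ lam₁ lam₂ (.inr ()) x v', hu : u' = u + x⟩ := hstep
      subst hu
      cases hedge
      all_goals
        obtain ⟨hfst, hsnd⟩ := ih _ rfl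
        simp only [Prod.fst_add, Prod.snd_add] at hfst hsnd
        constructor <;> lia
  · rintro ⟨hfst, hsnd⟩
    obtain ⟨m, hm⟩ := Int.le.dest hfst
    obtain ⟨n, hn⟩ := Int.le.dest hsnd
    have hv : v = u + m • (1, 0) + n • (0, -1) := by
      ext <;> simp only [Prod.fst_add, Prod.snd_add, Prod.smul_mk, nsmul_eq_mul] <;> lia
    rw [hv]
    exact (ZVASS.Edge.reaches_nsmul ThresholdEdge.incFst u m).trans
      (ZVASS.Edge.reaches_nsmul ThresholdEdge.decSnd _ n)

theorem thresholdVASS_reaches_word (w : List A) (q : Q₁) (s : Q₂) (u : ℤ × ℤ) :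
    (thresholdVASS M₁ M₂ lam₁ lam₂).Reaches (.inl (q, s), u)
      (.inl (M₁.run q w, M₂.run s w), u + (M₁.valFrom q w, M₂.valFrom s w)) := by
  induction w generalizing q s u with
  | nil => simpa [valFrom, run, Prod.mk_zero_zero] using Relation.ReflTransGen.refl
  | cons a w ih =>
    have hread := ZVASS.Edge.step (S := thresholdVASS M₁ M₂ lam₁ lam₂)
      (ThresholdEdge.read q s a) u
    simpa only [run, List.foldl_cons, valFrom, Prod.mk_add_mk, add_assoc] using
      (ih _ _ _).head hread

theorem thresholdVASS_reaches_sink_iff_exists_word (q : Q₁) (s : Q₂) (u v : ℤ × ℤ) :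
    (thresholdVASS M₁ M₂ lam₁ lam₂).Reaches (.inl (q, s), u) (.inr (), v) ↔
      ∃ w : List A, (thresholdVASS M₁ M₂ lam₁ lam₂).Reaches
        (.inr (), u + (M₁.valFrom q w, M₂.valFrom s w) + (-lam₁ + 1, -lam₂)) (.inr (), v) := by
  constructor
  · intro h
    generalize hp : ((.inl (q, s), u) : ((Q₁ × Q₂) ⊕ Unit) × ℤ × ℤ) = p at h
    induction h using Relation.ReflTransGen.head_induction_on generalizing q s u with
    | refl => cases hp
    | @head _ p' hstep hreach ih =>
      subst hp
      obtain ⟨v', u'⟩ := p'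
      obtain ⟨x, hedge : ThresholdEdge M₁ M₂ lam₁ lam₂ (.inl (q, s)) x v', hu : u' = u + x⟩ :=
        hstep
      subst hu
      cases hedge with
      | read _ _ a =>
        obtain ⟨w, hw⟩ := ih _ _ _ rfl
        exact ⟨a :: w, by simpa only [valFrom, Prod.mk_add_mk, add_assoc] using hw⟩
      | enterSink => exact ⟨[], by simpa [valFrom, Prod.mk_zero_zero] using hreach⟩
  · rintro ⟨w, hw⟩
    exact (thresholdVASS_reaches_word M₁ M₂ lam₁ lam₂ w q s u).trans
      (hw.head (ZVASS.Edge.step (ThresholdEdge.enterSink _ _) _))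

end DWA

theorem podwa_equivalence_to_vass_reachability_general {A Q₁ Q₂ : Type}
    (M₁ : DWA A Q₁) (M₂ : DWA A Q₂) (lam₁ lam₂ : ℤ) (q : Q₁) (s : Q₂) (u v : ℤ × ℤ) :
    (DWA.thresholdVASS M₁ M₂ lam₁ lam₂).Reaches (.inl (q, s), u) (.inr (), v) ↔
      ∃ w : List A, u.1 + M₁.valFrom q w < v.1 + lam₁ ∧
        v.2 + lam₂ ≤ u.2 + M₂.valFrom s w := by
  rw [DWA.thresholdVASS_reaches_sink_iff_exists_word]
  refine exists_congr fun w => ?_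
  rw [DWA.thresholdVASS_reaches_sink_sink_iff]
  simp only [Prod.fst_add, Prod.snd_add]
  constructor <;> rintro ⟨hfst, hsnd⟩ <;> constructor <;> lia

/-- correctness of the reduction of PODWA (in)equivalence to ℤ-reachability in a
2-dimensional ℤ-VASS. The VASS state space is `(Q₁ × Q₂) ⊕ Unit`, with `Sum.inr ()` playing
the role of the sink state `t`; a configuration is a pair of a state and a vector in `ℤ²`,
and reachability is the reflexive-transitive closure of the step relation (counters may go
negative). -/
theorem podwa_equivalence_to_vass_reachability
    (A : Type) [Fintype A] (Q₁ Q₂ : Type) [Fintype Q₁] [Fintype Q₂]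
    (M₁ : DWA A Q₁) (M₂ : DWA A Q₂) (lam₁ lam₂ : ℤ) :
    let V := (Q₁ × Q₂) ⊕ Unit
    let step : V × ℤ × ℤ → V × ℤ × ℤ → Prop := fun p p' =>
      -- product edges, labeled by the pairs of weights of the two automata
      (∃ (q : Q₁) (s : Q₂) (x : A), p.1 = Sum.inl (q, s) ∧
        p' = (Sum.inl (M₁.δ q x, M₂.δ s x), p.2.1 + M₁.c q x, p.2.2 + M₂.c s x)) ∨
      -- edges to the sink `t`, labeled `(-λ₁ + 1, -λ₂)`
      (∃ (q : Q₁) (s : Q₂), p.1 = Sum.inl (q, s) ∧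
        p' = (Sum.inr (), p.2.1 + (-lam₁ + 1), p.2.2 + (-lam₂))) ∨
      -- self-loops at `t`, labeled `(1, 0)` and `(0, -1)`
      (p.1 = Sum.inr () ∧
        (p' = (Sum.inr (), p.2.1 + 1, p.2.2) ∨ p' = (Sum.inr (), p.2.1, p.2.2 + (-1))))
    (Relation.ReflTransGen step
        ((Sum.inl (M₁.init, M₂.init) : V), (0 : ℤ), (0 : ℤ))
        ((Sum.inr () : V), (0 : ℤ), (0 : ℤ)) ↔
      ∃ w : List A, M₁.val w < lam₁ ∧ lam₂ ≤ M₂.val w) := by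
  intro V step
  have hstep : step = (DWA.thresholdVASS M₁ M₂ lam₁ lam₂).Step := by
    ext p p'
    exact (DWA.thresholdVASS_step_iff M₁ M₂ lam₁ lam₂ p p').symm
  simpa [hstep, ZVASS.Reaches, DWA.val] using
    podwa_equivalence_to_vass_reachability_general M₁ M₂ lam₁ lam₂ M₁.init M₂.init
      (0, 0) (0, 0)
end

section
/- Let G = (V, E) be a loopless directed graph with edges enumerated E = {e_1, …, e_m}, where e_i = (v_i, u_i), and let k ≥ 1. Let A_G be the DWA over Σ_G = {e_i⁻, e_i⁺ : 1 ≤ i ≤ m} with states {q_0, q_f} ∪ {q_v : v ∈ V}, initial state q_0, and, for every edge e_i = (v, u): δ(q_0, e_i⁻) = q_v and δ(q_0, e_i⁺) = q_u, both with weight −3i − 1; δ(q_v, e_i⁻) = q_f with weight 3i and δ(q_v, e_i⁺) = q_f with weight 3i + 2; δ(q_u, e_i⁻) = q_f with weight 3i + 2 and δ(q_u, e_i⁺) = q_f with weight 3i; for every vertex x that is not an endpoint of e_j, δ(q_x, e_j⁻) = δ(q_x, e_j⁺) = q_f with weight 3j + 1; and δ(q_f, y) = q_f with weight 0 for every letter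 y. Then G admits a proper k-coloring (a function λ : V → {1, …, k} with λ(u) ≠ λ(v) for every edge (u, v) ∈ E) if and only if there exists a DWA B over Σ_G with at most k + 2 states, all of whose weights have absolute value at most 3m + 2, obtained from A_G by merging, such that for every nonempty word w over Σ_G, B(w) > 0 if and only if A_G(w) > 0. -/
/-- A state of the automaton `A_G`: the initial state `q0`, the sink `qf`,
or a state `qv v` for a vertex `v`. -/
inductive StG (V : Type) where
  | q0 : StG V
  | qf : StG V
  | qv : V → StG V

/-- `B` is obtained from `M` by merging: there is a function `f`, surjective from the
reachable states of `M` onto the states of `B`, mapping the initial state to the initial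
state and commuting with the transition functions on reachable states (the weights of `B`
are unconstrained). -/
def ObtainedByMerging {A Q₁ Q₂ : Type} (M : DWA A Q₁) (B : DWA A Q₂) : Prop :=
  ∃ f : Q₁ → Q₂,
    (∀ p : Q₂, ∃ q : Q₁, (∃ w : List A, M.run M.init w = q) ∧ f q = p) ∧
    f M.init = B.init ∧
    (∀ q : Q₁, (∃ w : List A, M.run M.init w = q) → ∀ x : A, B.δ (f q) x = f (M.δ q x))

/-!
For a loopless graph the sign of the weight that `A_G` gives to a word depends only on its first two
letters and not on `G`: it is positive exactly when the edge of the second letter is later than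
that of the first one, or the two letters are the opposite letters of one edge. A proper coloring
`λ` turns `G` into a loopless multigraph `λ(G)` on the colors, so `A_{λ(G)}`, which has `k + 2`
states and is a quotient of `A_G`, has the same signs as `A_G`.

Conversely, let `B` be a quotient of `A_G` with the same signs. Pumping a letter at the image of
`q_f` shows that all weights there vanish, so the sign of `B` on a two-letter word is decided by the
first two weights. Then the images of `q_v` and `q_u` differ for every edge `(v, u)`, since the
inequalities for `e⁻e⁻`, `e⁻e⁺`, `e⁺e⁻`, `e⁺e⁺` contradict each other otherwise, and they avoid the
images of `q_0` and `q_f`. What remains for the vertices is a palette of at most `k` states.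
-/

namespace DWA

variable {A Q Q₁ Q₂ : Type}

theorem run_concat (M : DWA A Q) (q : Q) (w : List A) (x : A) :
    M.run q (w ++ [x]) = M.δ (M.run q w) x := by
  simp [run]

/-- A state is reachable if some word leads to it from the initial state. -/
def Reachable (M : DWA A Q) (q : Q) : Prop :=
  ∃ w, M.run M.init w = q

theorem reachable_init (M : DWA A Q) : M.Reachable M.init :=
  ⟨[], rfl⟩

theorem Reachable.step {M : DWA A Q} {q : Q} (hq : M.Reachable q) (x : A) :
    M.Reachable (M.δ q x) := by
  obtain ⟨w, rfl⟩ := hq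
  exact ⟨w ++ [x], M.run_concat _ w x⟩

theorem valFrom_append (M : DWA A Q) (q : Q) (u w : List A) :
    M.valFrom q (u ++ w) = M.valFrom q u + M.valFrom (M.run q u) w := by
  induction u generalizing q with
  | nil => simp [valFrom, run]
  | cons x u ih => simpa [valFrom, run, add_assoc] using ih _

theorem valFrom_replicate_of_loop (M : DWA A Q) {q : Q} {x : A} (hx : M.δ q x = q) (n : ℕ) :
    M.valFrom q (List.replicate n x) = n * M.c q x := by
  induction n with
  | zero => simp [valFrom]
  | succ n ih =>
    simp only [List.replicate_succ, valFrom, hx, ih]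
    push_cast
    ring

theorem valFrom_eq_zero_of_absorbing (M : DWA A Q) {q : Q} (hδ : ∀ x, M.δ q x = q)
    (hc : ∀ x, M.c q x = 0) (w : List A) : M.valFrom q w = 0 := by
  induction w with
  | nil => rfl
  | cons x w ih => simp only [valFrom, hc, hδ, ih, add_zero]

theorem valFrom_map {M : DWA A Q₁} {B : DWA A Q₂} {f : Q₁ → Q₂}
    (hδ : ∀ q x, B.δ (f q) x = f (M.δ q x)) (hc : ∀ q x, B.c (f q) x = M.c q x)
    (q : Q₁) (w : List A) : B.valFrom (f q) w = M.valFrom q w := by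
  induction w generalizing q with
  | nil => rfl
  | cons x w ih => simp only [valFrom, hδ, hc, ih]

section Pumping

variable (M : DWA A Q) {q : Q} {u : List A} {x : A} {a : ℤ}

theorem weight_loop_nonneg_of_le_valFrom (hx : M.δ (M.run q u) x = M.run q u)
    (h : ∀ n, a ≤ M.valFrom q (u ++ List.replicate n x)) : 0 ≤ M.c (M.run q u) x := by
  simp only [valFrom_append, M.valFrom_replicate_of_loop hx] at h
  by_contra! hneg
  have hn := h ((M.valFrom q u - a).toNat + 1)
  have := Int.self_le_toNat (M.valFrom q u - a)
  push_cast at hn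
  nlinarith

theorem weight_loop_nonpos_of_valFrom_le (hx : M.δ (M.run q u) x = M.run q u)
    (h : ∀ n, M.valFrom q (u ++ List.replicate n x) ≤ a) : M.c (M.run q u) x ≤ 0 := by
  simp only [valFrom_append, M.valFrom_replicate_of_loop hx] at h
  by_contra! hpos
  have hn := h ((a - M.valFrom q u).toNat + 1)
  have := Int.self_le_toNat (a - M.valFrom q u)
  push_cast at hn
  nlinarith

end Pumping

/-- The restriction of a DWA to its reachable states. -/
def accessible (M : DWA A Q) : DWA A {q // M.Reachable q} where
  init := ⟨M.init, M.reachable_init⟩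
  δ q x := ⟨M.δ q x, q.2.step x⟩
  c q x := M.c q x

theorem val_accessible (M : DWA A Q) (w : List A) : M.accessible.val w = M.val w :=
  (valFrom_map (f := Subtype.val) (fun _ _ => rfl) (fun _ _ => rfl) M.accessible.init w).symm

/-- The DWA obtained by renaming the states along a bijection. -/
def reindex (M : DWA A Q₁) (E : Q₁ ≃ Q₂) : DWA A Q₂ where
  init := E M.init
  δ p x := E (M.δ (E.symm p) x)
  c p x := M.c (E.symm p) x

theorem val_reindex (M : DWA A Q₁) (E : Q₁ ≃ Q₂) (w : List A) :
    (M.reindex E).val w = M.val w :=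
  valFrom_map (B := M.reindex E) (f := E) (by simp [reindex]) (by simp [reindex]) M.init w

end DWA

section Merging

variable {A Q₁ Q₂ Q₃ : Type} {M : DWA A Q₁} {B : DWA A Q₂} {f : Q₁ → Q₂}

/-- The conditions that `ObtainedByMerging` puts on the map `f`, except for surjectivity: `f`
preserves the initial state and, on reachable states, the transitions. -/
structure DWA.IsMergeMap (M : DWA A Q₁) (B : DWA A Q₂) (f : Q₁ → Q₂) : Prop where
  map_init : f M.init = B.init
  map_δ : ∀ q, M.Reachable q → ∀ x, B.δ (f q) x = f (M.δ q x)

theorem DWA.IsMergeMap.map_run (hf : M.IsMergeMap B f) (w : List A) :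
    f (M.run M.init w) = B.run B.init w := by
  induction w using List.reverseRecOn with
  | nil => exact hf.map_init
  | append_singleton w x ih =>
    rw [run_concat, run_concat, ← ih, hf.map_δ _ ⟨w, rfl⟩]

theorem ObtainedByMerging.reindex (h : ObtainedByMerging M B) (E : Q₂ ≃ Q₃) :
    ObtainedByMerging M (B.reindex E) := by
  obtain ⟨f, hsurj, hinit, hδ⟩ := h
  refine ⟨E ∘ f, fun p => ?_, congrArg E hinit, fun q hq x => ?_⟩
  · obtain ⟨q, hq, hfq⟩ := hsurj (E.symm p)
    exact ⟨q, hq, by simp [hfq]⟩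
  · simp [DWA.reindex, hδ q hq x]

theorem DWA.IsMergeMap.obtainedByMerging_accessible (hf : M.IsMergeMap B f) :
    ObtainedByMerging M B.accessible := by
  have hreach : ∀ q, M.Reachable q → B.Reachable (f q) := by
    rintro _ ⟨w, rfl⟩
    exact ⟨w, (hf.map_run w).symm⟩
  have hlift : ∀ q, ∃ p : {p // B.Reachable p}, M.Reachable q → p = f q := fun q => by
    by_cases hq : M.Reachable q
    · exact ⟨⟨f q, hreach q hq⟩, fun _ => rfl⟩
    · exact ⟨⟨B.init, B.reachable_init⟩, fun h => absurd h hq⟩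
  choose g hg using hlift
  refine ⟨g, ?_, ?_, fun q (hq : M.Reachable q) x => Subtype.ext ?_⟩
  · rintro ⟨_, w, rfl⟩
    exact ⟨_, ⟨w, rfl⟩, Subtype.ext <| (hg _ ⟨w, rfl⟩).trans (hf.map_run w)⟩
  · exact Subtype.ext <| (hg _ M.reachable_init).trans hf.map_init
  · simp only [DWA.accessible, hg q hq, hg _ (hq.step x), hf.map_δ q hq x]

theorem DWA.IsMergeMap.exists_obtainedByMerging_fin [Fintype Q₂] (hf : M.IsMergeMap B f) :
    ∃ (k : ℕ) (B' : DWA A (Fin k)), k ≤ Fintype.card Q₂ ∧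
      (∀ q x, ∃ p, B'.c q x = B.c p x) ∧ ObtainedByMerging M B' ∧
      ∀ w, B'.val w = B.val w := by
  classical
  let E := Fintype.equivFin {q // B.Reachable q}
  exact ⟨_, B.accessible.reindex E, Fintype.card_subtype_le _, fun q x => ⟨_, rfl⟩,
    hf.obtainedByMerging_accessible.reindex E, fun w => by
      rw [DWA.val_reindex, DWA.val_accessible]⟩

end Merging

/-- A DWA over the letters `i⁻ = (i, false)` and `i⁺ = (i, true)` *compares signs* with sink `s` if
every two-letter word leads to the absorbing state `s`, and words starting with two letters of the
same index have positive value exactly if these two letters have opposite signs. This is all that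
the lower bound on the number of states needs to know about `A_G` and its quotients. -/
structure ComparesSigns {ι Q : Type} (B : DWA (ι × Bool) Q) (s : Q) : Prop where
  δ_δ_init : ∀ x y, B.δ (B.δ B.init x) y = s
  δ_sink : ∀ x, B.δ s x = s
  val_pos : ∀ i b w, 0 < B.val ((i, b) :: (i, !b) :: w)
  val_nonpos : ∀ i b w, B.val ((i, b) :: (i, b) :: w) ≤ 0

namespace ComparesSigns

variable {ι Q Q' : Type} {B : DWA (ι × Bool) Q} {s : Q}

theorem of_isMergeMap {B' : DWA (ι × Bool) Q'} {f : Q → Q'} (hB : ComparesSigns B s)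
    (hf : B.IsMergeMap B' f) (hsign : ∀ w, w ≠ [] → (0 < B'.val w ↔ 0 < B.val w)) :
    ComparesSigns B' (f s) where
  δ_δ_init x y := by
    rw [← hf.map_init, hf.map_δ _ B.reachable_init, hf.map_δ _ (B.reachable_init.step x),
      hB.δ_δ_init]
  δ_sink x := by
    have hs : B.Reachable s := hB.δ_δ_init x x ▸ (B.reachable_init.step x).step x
    rw [hf.map_δ s hs, hB.δ_sink]
  val_pos i b w := (hsign _ (List.cons_ne_nil _ _)).2 (hB.val_pos i b w)
  val_nonpos i b w := by
    rw [← not_lt, hsign _ (List.cons_ne_nil _ _), not_lt]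
    exact hB.val_nonpos i b w

theorem c_sink [Nonempty ι] (hB : ComparesSigns B s) (z : ι × Bool) : B.c s z = 0 := by
  obtain ⟨i⟩ := ‹Nonempty ι›
  have hrun : ∀ x y, B.run B.init [x, y] = s := hB.δ_δ_init
  have hloop : ∀ x y, B.δ (B.run B.init [x, y]) z = B.run B.init [x, y] := fun x y => by
    rw [hrun, hB.δ_sink]
  apply le_antisymm
  · rw [← hrun (i, true) (i, true)]
    exact B.weight_loop_nonpos_of_valFrom_le (hloop _ _) fun n => hB.val_nonpos i true _
  · rw [← hrun (i, true) (i, false)]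
    exact B.weight_loop_nonneg_of_le_valFrom (hloop _ _) fun n => (hB.val_pos i true _).le

theorem weight_add_weight_pos (hB : ComparesSigns B s) (i : ι) (b : Bool) :
    0 < B.c B.init (i, b) + B.c (B.δ B.init (i, b)) (i, !b) := by
  simpa [DWA.val, DWA.valFrom] using hB.val_pos i b []

theorem weight_add_weight_nonpos (hB : ComparesSigns B s) (i : ι) (b : Bool) :
    B.c B.init (i, b) + B.c (B.δ B.init (i, b)) (i, b) ≤ 0 := by
  simpa [DWA.val, DWA.valFrom] using hB.val_nonpos i b []

theorem δ_init_false_ne_true (hB : ComparesSigns B s) (i : ι) :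
    B.δ B.init (i, false) ≠ B.δ B.init (i, true) := by
  intro h
  have hpp := hB.weight_add_weight_nonpos i true
  have hpm := hB.weight_add_weight_pos i true
  have hmm := hB.weight_add_weight_nonpos i false
  have hmp := hB.weight_add_weight_pos i false
  simp only [h, Bool.not_true, Bool.not_false] at hpm hmm hmp
  omega

theorem δ_init_ne_sink (hB : ComparesSigns B s) (x : ι × Bool) : B.δ B.init x ≠ s := by
  intro h
  have : Nonempty ι := ⟨x.1⟩
  have hpos := hB.weight_add_weight_pos x.1 x.2
  have hnonpos := hB.weight_add_weight_nonpos x.1 x.2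
  simp only [h, hB.c_sink] at hpos hnonpos
  omega

theorem δ_init_ne_init (hB : ComparesSigns B s) (x : ι × Bool) : B.δ B.init x ≠ B.init := by
  intro h
  have hs := hB.δ_δ_init x x
  rw [h] at hs
  exact hB.δ_init_ne_sink x hs

theorem init_ne_sink [Nonempty ι] (hB : ComparesSigns B s) : B.init ≠ s := by
  rintro rfl
  obtain ⟨i⟩ := ‹Nonempty ι›
  exact hB.δ_init_ne_sink (i, true) (hB.δ_sink _)

end ComparesSigns

section Reduction

variable {V W : Type} {m : ℕ}

/-- The vertex whose state is entered when `A_G` reads the letter `l` first: the source of the edge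
`e` for the letter `e⁻ = (e, false)`, its target for `e⁺ = (e, true)`. -/
def letterVertex (e : Fin m → V × V) (l : Fin m × Bool) : V :=
  if l.2 then (e l.1).2 else (e l.1).1

/-- The automaton `A_G` of the graph with edges `e 0, …, e (m - 1)`, which are the edges
`e_1, …, e_m` of the paper; hence the factors `l.1 + 1`. -/
def reductionDWA [DecidableEq V] (e : Fin m → V × V) : DWA (Fin m × Bool) (StG V) where
  init := .q0
  δ q l :=
    match q with
    | .q0 => .qv (letterVertex e l)
    | .qv _ => .qf
    | .qf => .qf
  c q l :=
    match q with
    | .q0 => -3 * ((l.1 : ℤ) + 1) - 1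
    | .qv v =>
        if v = (e l.1).1 then
          (if l.2 then 3 * ((l.1 : ℤ) + 1) + 2 else 3 * ((l.1 : ℤ) + 1))
        else if v = (e l.1).2 then
          (if l.2 then 3 * ((l.1 : ℤ) + 1) else 3 * ((l.1 : ℤ) + 1) + 2)
        else 3 * ((l.1 : ℤ) + 1) + 1
    | .qf => 0

namespace reductionDWA

section Weights

variable [DecidableEq V] (e : Fin m → V × V)

theorem c_qv_mem_Icc (v : V) (x : Fin m × Bool) :
    (reductionDWA e).c (.qv v) x ∈ Set.Icc (3 * ((x.1 : ℤ) + 1)) (3 * ((x.1 : ℤ) + 1) + 2) := by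
  simp only [reductionDWA, Set.mem_Icc]
  split_ifs <;> omega

theorem abs_c_le (q : StG V) (x : Fin m × Bool) : |(reductionDWA e).c q x| ≤ 3 * m + 2 := by
  have hx := x.1.isLt
  rw [abs_le]
  cases q with
  | q0 => simp only [reductionDWA]; omega
  | qv v =>
    obtain ⟨hlower, hupper⟩ := c_qv_mem_Icc e v x
    omega
  | qf => simp only [reductionDWA]; omega

theorem val_singleton_neg (x : Fin m × Bool) : (reductionDWA e).val [x] < 0 := by
  simp only [DWA.val, DWA.valFrom, reductionDWA]
  omega

theorem val_cons_cons (x y : Fin m × Bool) (w : List (Fin m × Bool)) :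
    (reductionDWA e).val (x :: y :: w) =
      -3 * ((x.1 : ℤ) + 1) - 1 + (reductionDWA e).c (.qv (letterVertex e x)) y := by
  have hqf : (reductionDWA e).valFrom .qf w = 0 :=
    DWA.valFrom_eq_zero_of_absorbing _ (fun _ => rfl) (fun _ => rfl) w
  rw [← add_zero ((reductionDWA e).c (.qv (letterVertex e x)) y), ← hqf]
  rfl

end Weights

section Signs

variable [DecidableEq V] {e : Fin m → V × V}

theorem c_qv_letterVertex (hloop : ∀ i, (e i).1 ≠ (e i).2) (i : Fin m) (a b : Bool) :
    (reductionDWA e).c (.qv (letterVertex e (i, a))) (i, b) =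
      if a = b then 3 * ((i : ℤ) + 1) else 3 * ((i : ℤ) + 1) + 2 := by
  cases a <;> cases b <;> simp [reductionDWA, letterVertex, (hloop i).symm]

theorem val_cons_cons_pos_iff (hloop : ∀ i, (e i).1 ≠ (e i).2) (x y : Fin m × Bool)
    (w : List (Fin m × Bool)) :
    0 < (reductionDWA e).val (x :: y :: w) ↔ x.1 < y.1 ∨ x.1 = y.1 ∧ x.2 ≠ y.2 := by
  rw [val_cons_cons]
  obtain ⟨i, a⟩ := x
  obtain ⟨j, b⟩ := y
  obtain ⟨hlower, hupper⟩ := c_qv_mem_Icc e (letterVertex e (i, a)) (j, b)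
  rcases eq_or_ne i j with rfl | hij
  · rw [c_qv_letterVertex hloop]
    by_cases hab : a = b <;> simp [hab] <;> omega
  · simp only [hij, false_and, or_false, Fin.lt_def]
    dsimp only at hlower hupper
    have := Fin.val_ne_of_ne hij
    omega

theorem comparesSigns (hloop : ∀ i, (e i).1 ≠ (e i).2) :
    ComparesSigns (reductionDWA e) .qf where
  δ_δ_init _ _ := rfl
  δ_sink _ := rfl
  val_pos i b w := by simp [val_cons_cons_pos_iff hloop]
  val_nonpos i b w := by simp [← not_lt, val_cons_cons_pos_iff hloop]

theorem val_pos_iff_val_pos [DecidableEq W] {e' : Fin m → W × W}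
    (hloop : ∀ i, (e i).1 ≠ (e i).2) (hloop' : ∀ i, (e' i).1 ≠ (e' i).2) (w : List (Fin m × Bool)) :
    0 < (reductionDWA e').val w ↔ 0 < (reductionDWA e).val w := by
  match w with
  | [] => rfl
  | [x] => exact iff_of_false (val_singleton_neg e' x).not_gt (val_singleton_neg e x).not_gt
  | x :: y :: w => rw [val_cons_cons_pos_iff hloop, val_cons_cons_pos_iff hloop']

end Signs

end reductionDWA

/-- The map on the states of `A_G` induced by a map on vertices. -/
def StG.map (f : V → W) : StG V → StG W
  | .q0 => .q0
  | .qv v => .qv (f v)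
  | .qf => .qf

theorem reductionDWA.isMergeMap_map [DecidableEq V] [DecidableEq W] (e : Fin m → V × V)
    (f : V → W) :
    (reductionDWA e).IsMergeMap (reductionDWA (Prod.map f f ∘ e)) (StG.map f) where
  map_init := rfl
  map_δ q _ x := by
    cases q with
    | q0 => exact congrArg StG.qv (apply_ite f _ _ _).symm
    | qv v => rfl
    | qf => rfl

/-- The two special states as added points, from which `StG V` inherits its finiteness. -/
def StG.equivOption : StG V ≃ Option (Option V) where
  toFun
    | .q0 => none
    | .qv v => some (some v)
    | .qf => some none
  invFun
    | none => .q0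
    | some none => .qf
    | some (some v) => .qv v
  left_inv q := by cases q <;> rfl
  right_inv q := by rcases q with _ | _ | _ <;> rfl

instance [Fintype V] : Fintype (StG V) :=
  Fintype.ofEquiv _ StG.equivOption.symm

theorem StG.card [Fintype V] : Fintype.card (StG V) = Fintype.card V + 2 := by
  rw [Fintype.card_congr StG.equivOption, Fintype.card_option, Fintype.card_option]

theorem exists_merging_of_coloring [DecidableEq V] [Fintype W] (e : Fin m → V × V)
    {coloring : V → W} (hproper : ∀ i, coloring (e i).1 ≠ coloring (e i).2) :
    ∃ (k' : ℕ) (B : DWA (Fin m × Bool) (Fin k')), k' ≤ Fintype.card W + 2 ∧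
      (∀ q x, |B.c q x| ≤ 3 * m + 2) ∧ ObtainedByMerging (reductionDWA e) B ∧
      ∀ w, 0 < B.val w ↔ 0 < (reductionDWA e).val w := by
  classical
  have hloop : ∀ i, (e i).1 ≠ (e i).2 := fun i h => hproper i (congrArg coloring h)
  obtain ⟨k', B, hk', hc, hmerge, hval⟩ :=
    (reductionDWA.isMergeMap_map e coloring).exists_obtainedByMerging_fin
  refine ⟨k', B, hk'.trans_eq StG.card, fun q x => ?_, hmerge, fun w => ?_⟩
  · obtain ⟨p, hp⟩ := hc q x
    exact hp ▸ reductionDWA.abs_c_le _ p x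
  · rw [hval, reductionDWA.val_pos_iff_val_pos hloop hproper]

theorem exists_injOn_compl_pair {α β : Type*} [Fintype α] [Fintype β] [Nonempty β]
    (hcard : Fintype.card α ≤ Fintype.card β + 2) {a b : α} (hab : a ≠ b) :
    ∃ φ : α → β, Set.InjOn φ {a, b}ᶜ := by
  have hncard : ({a, b}ᶜ : Set α).ncard ≤ Fintype.card β := by
    rw [Set.ncard_compl, Set.ncard_pair hab, Nat.card_eq_fintype_card]
    omega
  have hencard : ({a, b}ᶜ : Set α).encard ≤ (Set.univ : Set β).encard := by
    rw [← (Set.toFinite _).cast_ncard_eq, Set.encard_univ, ENat.card_eq_coe_fintype_card]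
    exact_mod_cast hncard
  obtain ⟨φ, -, hφ⟩ := (Set.toFinite _).exists_injOn_of_encard_le hencard
  exact ⟨φ, hφ⟩

theorem exists_coloring_of_merging [DecidableEq V] {Q : Type} [Fintype Q] [Fintype W] [Nonempty W]
    {e : Fin m → V × V} (hloop : ∀ i, (e i).1 ≠ (e i).2) {B : DWA (Fin m × Bool) Q}
    (hcard : Fintype.card Q ≤ Fintype.card W + 2) (hmerge : ObtainedByMerging (reductionDWA e) B)
    (hsign : ∀ w, w ≠ [] → (0 < B.val w ↔ 0 < (reductionDWA e).val w)) :
    ∃ coloring : V → W, ∀ i, coloring (e i).1 ≠ coloring (e i).2 := by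
  rcases isEmpty_or_nonempty (Fin m) with _ | _
  · exact ⟨fun _ => Classical.arbitrary W, isEmptyElim⟩
  obtain ⟨f, -, hinit, hδ⟩ := hmerge
  have hf : (reductionDWA e).IsMergeMap B f := ⟨hinit, hδ⟩
  have hB := (reductionDWA.comparesSigns hloop).of_isMergeMap hf hsign
  obtain ⟨φ, hφ⟩ := exists_injOn_compl_pair hcard hB.init_ne_sink
  have hmem : ∀ x, B.δ B.init x ∈ ({B.init, f .qf} : Set Q)ᶜ := fun x => by
    simp [hB.δ_init_ne_init x, hB.δ_init_ne_sink x]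
  have hstate : ∀ x, B.δ B.init x = f (.qv (letterVertex e x)) := fun x => by
    rw [← hf.map_init]
    exact hf.map_δ _ (reductionDWA e).reachable_init x
  refine ⟨fun v => φ (f (.qv v)), fun i hi => hB.δ_init_false_ne_true i ?_⟩
  refine hφ (hmem _) (hmem _) ?_
  rw [hstate, hstate]
  exact hi

end Reduction

theorem coloring_iff_minimization_by_merging_general {V : Type} [DecidableEq V] {m : ℕ}
    (e : Fin m → V × V) (hloop : ∀ i, (e i).1 ≠ (e i).2) {k : ℕ} (hk : 1 ≤ k) :
    (∃ coloring : V → Fin k, ∀ i, coloring (e i).1 ≠ coloring (e i).2) ↔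
      ∃ (k' : ℕ) (B : DWA (Fin m × Bool) (Fin k')), k' ≤ k + 2 ∧
        (∀ q x, |B.c q x| ≤ 3 * m + 2) ∧ ObtainedByMerging (reductionDWA e) B ∧
        ∀ w, w ≠ [] → (0 < B.val w ↔ 0 < (reductionDWA e).val w) := by
  constructor
  · rintro ⟨coloring, hproper⟩
    obtain ⟨k', B, hk', hc, hmerge, hsign⟩ := exists_merging_of_coloring e hproper
    exact ⟨k', B, by simpa using hk', hc, hmerge, fun w _ => hsign w⟩
  · rintro ⟨k', B, hk', -, hmerge, hsign⟩
    have : Nonempty (Fin k) := ⟨⟨0, hk⟩⟩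
    exact exists_coloring_of_merging hloop (by simpa using hk') hmerge hsign

/-- correctness of the reduction from `k`-coloring to O-minimization by merging.
The graph has vertex set `V` and edges `e 0, …, e (m-1)` (the index `i : Fin m` represents
the edge `e_{i+1}` of the paper, and `(i, false)`/`(i, true)` are the letters
`e_{i+1}⁻`/`e_{i+1}⁺`); the graph is loopless. `G` admits a proper `k`-coloring iff there is
a DWA `B` with at most `k + 2` states, all weights of absolute value at most `3m + 2`,
obtained from `A_G` by merging and observationally equivalent to `A_G`. -/
theorem coloring_iff_minimization_by_merging
    (V : Type) [Fintype V] [DecidableEq V] (m : ℕ) (e : Fin m → V × V)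
    (hloop : ∀ i : Fin m, (e i).1 ≠ (e i).2) (k : ℕ) (hk : 1 ≤ k) :
    let δG : StG V → Fin m × Bool → StG V := fun q l =>
      match q with
      | StG.q0 => StG.qv (if l.2 then (e l.1).2 else (e l.1).1)
      | _ => StG.qf
    let cG : StG V → Fin m × Bool → ℤ := fun q l =>
      match q with
      | StG.q0 => -3 * ((l.1 : ℤ) + 1) - 1
      | StG.qf => 0
      | StG.qv v =>
          if v = (e l.1).1 then
            (if l.2 then 3 * ((l.1 : ℤ) + 1) + 2 else 3 * ((l.1 : ℤ) + 1))
          else if v = (e l.1).2 then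
            (if l.2 then 3 * ((l.1 : ℤ) + 1) else 3 * ((l.1 : ℤ) + 1) + 2)
          else 3 * ((l.1 : ℤ) + 1) + 1
    let AG : DWA (Fin m × Bool) (StG V) := ⟨StG.q0, δG, cG⟩
    ((∃ coloring : V → Fin k, ∀ i : Fin m, coloring (e i).1 ≠ coloring (e i).2) ↔
      ∃ (k' : ℕ) (B : DWA (Fin m × Bool) (Fin k')),
        k' ≤ k + 2 ∧
        (∀ q x, |B.c q x| ≤ 3 * m + 2) ∧
        ObtainedByMerging AG B ∧
        (∀ w : List (Fin m × Bool), w ≠ [] → (0 < B.val w ↔ 0 < AG.val w))) := by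
  intro δG cG AG
  have hAG : AG = reductionDWA e := by
    refine congrArg₂ (DWA.mk StG.q0) ?_ ?_ <;> funext q l <;> cases q <;> rfl
  exact hAG ▸ coloring_iff_minimization_by_merging_general e hloop hk
end

section
/- Let φ be a 3-CNF formula with variables p_1, …, p_m and clauses C_1, …, C_r, each clause consisting of three literals (a literal is either a variable p_i or its negation ¬p_i). Then φ is satisfiable if and only if there exist integers v_q, v_1, …, v_m, v̄_1, …, v̄_m such that: 0 ≤ v_q ≤ 1 and v_q + v_q ≥ 2; for every i, 0 ≤ v_i ≤ 1, 0 ≤ v̄_i ≤ 1, 0 ≤ v_i + v̄_i ≤ 1, and v_i + v̄_i + v_q ≥ 2; and for every clause C_j with literals x, y, z, val(x) + val(y) + val(z) + v_q ≥ 2, where val(p_i) = v_i and val(¬p_i) = v̄_i. -/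
/-!
The constraints on `q` force `vq = 1`. Those on the variable `i` then read
`1 ≤ v i + vbar i ≤ 1` with nonnegative summands, so over `ℤ` exactly one of `v i` and `vbar i` is
`1` and the other is `0`. Hence the feasible weights are exactly the `0`-`1` truth values of the
literals under an assignment, and a clause constraint says that at least one literal is true.
-/

/-- Literals over the propositional variables `V`: `(i, true)` is the variable `i` and `(i, false)`
its negation. -/
abbrev Literal (V : Type*) := V × Bool

namespace Literal

variable {V : Type*}

/-- The weight `val l` of the letter of a literal, where the letters `p_i` and `p̄_i` have
weights `v i` and `vbar i`. -/
def weight (v vbar : V → ℤ) (l : Literal V) : ℤ := if l.2 then v l.1 else vbar l.1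

/-- The truth value of a literal under the assignment `σ`, as one of the integers `0` and `1`, so
that it can be compared with `Literal.weight`. -/
def truthValue (σ : V → Bool) (l : Literal V) : ℤ := if σ l.1 = l.2 then 1 else 0

theorem weight_true_false (f : Literal V → ℤ) :
    weight (fun i => f (i, true)) (fun i => f (i, false)) = f := by
  ext ⟨i, b⟩
  cases b <;> rfl

theorem weight_eq_truthValue_iff {v vbar : V → ℤ} {σ : V → Bool} :
    weight v vbar = truthValue σ ↔
      ∀ i, v i = (if σ i then 1 else 0) ∧ vbar i = (if σ i then 0 else 1) := by
  simp [funext_iff, weight, truthValue, forall_and, and_comm, ← Bool.not_eq_true, ite_not]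

theorem exists_weight_eq_truthValue_iff {v vbar : V → ℤ} :
    (∃ σ, weight v vbar = truthValue σ) ↔ ∀ i, 0 ≤ v i ∧ 0 ≤ vbar i ∧ v i + vbar i = 1 := by
  simp only [weight_eq_truthValue_iff]
  constructor
  · rintro ⟨σ, hσ⟩ i
    obtain ⟨hv, hvbar⟩ := hσ i
    split_ifs at hv hvbar <;> omega
  · intro h
    refine ⟨fun i => decide (v i = 1), fun i => ?_⟩
    obtain ⟨hv, hvbar, hsum⟩ := h i
    simp only [decide_eq_true_eq]
    split_ifs <;> omega

theorem one_le_sum_truthValue_iff {σ : V → Bool} {c : List (Literal V)} :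
    1 ≤ (c.map (truthValue σ)).sum ↔ ∃ l ∈ c, σ l.1 = l.2 := by
  have sum_eq_countP : (c.map (truthValue σ)).sum = c.countP fun l => σ l.1 = l.2 := by
    induction c with
    | nil => rfl
    | cons l c ih => simp [truthValue, List.countP_cons, ih, add_comm]
  rw [sum_eq_countP, Nat.one_le_cast, Nat.succ_le_iff, List.countP_pos_iff]
  simp only [decide_eq_true_eq]

theorem weight_constraints_iff {vq : ℤ} {v vbar : V → ℤ} :
    ((0 ≤ vq ∧ vq ≤ 1 ∧ 2 ≤ vq + vq) ∧
      ∀ i, 0 ≤ v i ∧ v i ≤ 1 ∧ 0 ≤ vbar i ∧ vbar i ≤ 1 ∧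
        0 ≤ v i + vbar i ∧ v i + vbar i ≤ 1 ∧ 2 ≤ v i + vbar i + vq) ↔
      vq = 1 ∧ ∃ σ, weight v vbar = truthValue σ := by
  have vq_eq_one : 0 ≤ vq ∧ vq ≤ 1 ∧ 2 ≤ vq + vq ↔ vq = 1 := by omega
  rw [vq_eq_one, exists_weight_eq_truthValue_iff]
  refine and_congr_right fun hq => forall_congr' fun i => ?_
  omega

end Literal

open Literal in
theorem three_sat_reduction_correct_general {V ι : Type*} (C : ι → List (Literal V)) :
    (∃ σ : V → Bool, ∀ j, ∃ l ∈ C j, σ l.1 = l.2) ↔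
      ∃ (vq : ℤ) (v vbar : V → ℤ),
        (0 ≤ vq ∧ vq ≤ 1 ∧ 2 ≤ vq + vq) ∧
        (∀ i, 0 ≤ v i ∧ v i ≤ 1 ∧ 0 ≤ vbar i ∧ vbar i ≤ 1 ∧
          0 ≤ v i + vbar i ∧ v i + vbar i ≤ 1 ∧ 2 ≤ v i + vbar i + vq) ∧
        ∀ j, 2 ≤ ((C j).map (weight v vbar)).sum + vq := by
  have clause_iff (σ : V → Bool) (j : ι) :
      2 ≤ ((C j).map (truthValue σ)).sum + 1 ↔ ∃ l ∈ C j, σ l.1 = l.2 := by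
    rw [← one_le_sum_truthValue_iff]
    omega
  constructor
  · rintro ⟨σ, hσ⟩
    have hweight := weight_true_false (truthValue σ)
    obtain ⟨hq, hv⟩ := weight_constraints_iff.2 ⟨rfl, σ, hweight⟩
    refine ⟨1, _, _, hq, hv, fun j => ?_⟩
    rw [hweight]
    exact (clause_iff σ j).2 (hσ j)
  · rintro ⟨vq, v, vbar, hq, hv, hC⟩
    obtain ⟨rfl, σ, hweight⟩ := weight_constraints_iff.1 ⟨hq, hv⟩
    rw [hweight] at hC
    exact ⟨σ, fun j => (clause_iff σ j).1 (hC j)⟩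

/-- correctness of the reduction from 3-SAT used for NP-hardness of sample
fitting. A literal is a pair `(i, b) : Fin m × Bool` (`b = true` for the variable `p_{i+1}`,
`b = false` for its negation); a clause is a triple of literals. The formula `φ` with clauses
`C 0, …, C (r-1)` is satisfiable iff there are integers `vq, v_1, …, v_m, v̄_1, …, v̄_m`
satisfying the listed constraints. -/
theorem three_sat_reduction_correct (m r : ℕ)
    (C : Fin r → (Fin m × Bool) × (Fin m × Bool) × (Fin m × Bool)) :
    ((∃ σ : Fin m → Bool,
        ∀ j : Fin r,
          (σ (C j).1.1 = (C j).1.2) ∨ (σ (C j).2.1.1 = (C j).2.1.2) ∨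
            (σ (C j).2.2.1 = (C j).2.2.2)) ↔
      ∃ (vq : ℤ) (v vbar : Fin m → ℤ),
        let litVal : Fin m × Bool → ℤ := fun l => if l.2 then v l.1 else vbar l.1
        (0 ≤ vq ∧ vq ≤ 1 ∧ 2 ≤ vq + vq) ∧
        (∀ i : Fin m,
          0 ≤ v i ∧ v i ≤ 1 ∧ 0 ≤ vbar i ∧ vbar i ≤ 1 ∧
          0 ≤ v i + vbar i ∧ v i + vbar i ≤ 1 ∧ 2 ≤ v i + vbar i + vq) ∧
        (∀ j : Fin r,
          2 ≤ litVal (C j).1 + litVal (C j).2.1 + litVal (C j).2.2 + vq)) := by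
  simpa [Literal.weight, add_assoc] using
    three_sat_reduction_correct_general fun j => [(C j).1, (C j).2.1, (C j).2.2]
end

section
/- For every DWA A over a finite alphabet Σ there exists a DWA B over Σ (with at most one more state than A) such that for every nonempty word w, B(w) > 0 if and only if A(w) ≤ 0. Hence the class of binary-PODWA-recognizable languages is closed under complement (within the set of nonempty words). -/
/-! Weights are integers, so `A(w) ≤ 0` is equivalent to `0 < 1 - A(w)`. Negating all weights
realizes `-A(w)`, and the constant `1` is charged on the first letter, which every nonempty word
has exactly once. -/

/-- The automaton over the same states with all weights negated, which realizes `w ↦ -A(w)`. -/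
def DWA.neg {A Q : Type} (M : DWA A Q) : DWA A Q where
  init := M.init
  δ := M.δ
  c q a := -M.c q a

/-- The automaton that charges `k` once, on the first letter. As `M` may return to its initial
state, the first letter is read from a fresh initial state `none`. -/
def DWA.addFirst {A Q : Type} (M : DWA A Q) (k : ℤ) : DWA A (Option Q) where
  init := none
  δ q a := some (M.δ (q.getD M.init) a)
  c q a := q.elim (M.c M.init a + k) (M.c · a)

namespace DWA

variable {A Q : Type} (M : DWA A Q)

theorem valFrom_neg (q : Q) (w : List A) : M.neg.valFrom q w = -M.valFrom q w := by
  induction w generalizing q with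
  | nil => rfl
  | cons a w ih =>
    calc M.neg.valFrom q (a :: w)
        = -M.c q a + M.neg.valFrom (M.δ q a) w := rfl
      _ = -M.c q a + -M.valFrom (M.δ q a) w := by rw [ih]
      _ = -M.valFrom q (a :: w) := (neg_add _ _).symm

theorem val_neg (w : List A) : M.neg.val w = -M.val w :=
  M.valFrom_neg M.init w

theorem valFrom_addFirst_some (k : ℤ) (q : Q) (w : List A) :
    (M.addFirst k).valFrom (some q) w = M.valFrom q w := by
  induction w generalizing q with
  | nil => rfl
  | cons a w ih => exact congrArg (M.c q a + ·) (ih (M.δ q a))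

theorem val_addFirst (k : ℤ) {w : List A} (hw : w ≠ []) :
    (M.addFirst k).val w = M.val w + k := by
  obtain ⟨a, w, rfl⟩ := List.exists_cons_of_ne_nil hw
  calc (M.addFirst k).val (a :: w)
      = M.c M.init a + k + (M.addFirst k).valFrom (some (M.δ M.init a)) w := rfl
    _ = M.c M.init a + k + M.valFrom (M.δ M.init a) w := by rw [valFrom_addFirst_some]
    _ = M.val (a :: w) + k := add_right_comm _ _ _

end DWA

theorem binary_podwa_closed_under_complement_general {A Q : Type} (M : DWA A Q) :
    ∃ B : DWA A (Option Q), ∀ w : List A, w ≠ [] → (0 < B.val w ↔ M.val w ≤ 0) := by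
  refine ⟨M.neg.addFirst 1, fun w hw => ?_⟩
  rw [DWA.val_addFirst _ _ hw, DWA.val_neg, Int.lt_add_one_iff, neg_nonneg]

/-- for every DWA `A` there is a DWA `B` with at most one more state such that,
for every nonempty word `w`, `B(w) > 0 ↔ A(w) ≤ 0`; hence the class of
binary-PODWA-recognizable languages is closed under complement (within nonempty words). -/
theorem binary_podwa_closed_under_complement
    (A : Type) (Q : Type) [Fintype Q] (M : DWA A Q) :
    ∃ (Q' : Type) (inst : Fintype Q') (B : DWA A Q'),
      @Fintype.card Q' inst ≤ Fintype.card Q + 1 ∧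
      ∀ w : List A, w ≠ [] → (0 < B.val w ↔ M.val w ≤ 0) := by
  obtain ⟨B, hB⟩ := binary_podwa_closed_under_complement_general M
  exact ⟨Option Q, inferInstance, B, Fintype.card_option.le, hB⟩
end

section
/- Every regular language L over a finite alphabet Σ with ε ∉ L is binary-PODWA-recognizable: for every deterministic finite automaton M with finitely many states accepting L, there exists a DWA A over Σ such that for every nonempty word w, A(w) > 0 if and only if M accepts w. -/
/-!
Weigh each transition by the change of the indicator function of the accepting states. The weights
along a run telescope, so the value of a word is the indicator at the last state of its run minus
the indicator at the initial state, and the latter vanishes when `ε` is rejected.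
-/

namespace DWA

variable {A Q : Type}

theorem valFrom_eq_sub_of_c_eq_sub {B : DWA A Q} {f : Q → ℤ}
    (hc : ∀ q x, B.c q x = f (B.δ q x) - f q) (q : Q) (w : List A) :
    B.valFrom q w = f (B.run q w) - f q := by
  induction w generalizing q with
  | nil => exact (sub_self (f q)).symm
  | cons x w ih =>
    calc B.valFrom q (x :: w)
        = B.c q x + B.valFrom (B.δ q x) w := rfl
      _ = (f (B.δ q x) - f q) + (f (B.run (B.δ q x) w) - f (B.δ q x)) := by rw [hc, ih]
      _ = f (B.run (B.δ q x) w) - f q := sub_add_sub_cancel' _ _ _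

/-- The DWA on the states of a DFA `M` whose positive words are those accepted by `M`, provided `M`
rejects `ε`: a transition from a rejecting to an accepting state has weight `1`, one from an
accepting to a rejecting state has weight `-1`, and every other transition has weight `0`. -/
noncomputable def ofDFA (M : DFA A Q) : DWA A Q where
  init := M.start
  δ := M.step
  c q x := M.accept.indicator 1 (M.step q x) - M.accept.indicator 1 q

theorem val_ofDFA (M : DFA A Q) (w : List A) :
    (ofDFA M).val w = M.accept.indicator 1 (M.eval w) - M.accept.indicator 1 M.start :=
  valFrom_eq_sub_of_c_eq_sub (fun _ _ => rfl) M.start w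

theorem val_ofDFA_pos_iff (M : DFA A Q) (w : List A) :
    0 < (ofDFA M).val w ↔ w ∈ M.accepts ∧ [] ∉ M.accepts := by
  rw [val_ofDFA, DFA.mem_accepts, DFA.mem_accepts, DFA.eval_nil]
  by_cases hw : M.eval w ∈ M.accept <;> by_cases hε : M.start ∈ M.accept <;> simp [hw, hε]

end DWA

theorem regular_implies_binary_podwa_recognizable_general
    (A σ : Type) (M : DFA A σ) (hε : [] ∉ M.accepts) :
    ∃ B : DWA A σ, ∀ w : List A, 0 < B.val w ↔ w ∈ M.accepts :=
  ⟨DWA.ofDFA M, fun w => (DWA.val_ofDFA_pos_iff M w).trans (and_iff_left hε)⟩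

/-- every regular language not containing the empty word is
binary-PODWA-recognizable: for every DFA `M` (with finitely many states) not accepting `ε`,
there is a DWA `B` whose value is positive exactly on the nonempty words accepted by `M`. -/
theorem regular_implies_binary_podwa_recognizable
    (A : Type) [Fintype A] (σ : Type) [Fintype σ] (M : DFA A σ)
    (hε : [] ∉ M.accepts) :
    ∃ (Q : Type) (_ : Fintype Q) (B : DWA A Q),
      ∀ w : List A, w ≠ [] → (0 < B.val w ↔ w ∈ M.accepts) :=
  let ⟨B, hB⟩ := regular_implies_binary_podwa_recognizable_general A σ M hε
  ⟨σ, inferInstance, B, fun w _ => hB w⟩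
end

section
/- Let Σ be a finite nonempty alphabet, let S be a finite set of pairwise-disjoint nonempty integer intervals covering ℤ, let W be a finite set of nonempty words over Σ, and let g : W → S. Then there exists a DWA A over Σ such that for every w ∈ W, the value A(w) belongs to the interval g(w). In particular, every finite sample assigning to each word a single observation interval is consistent with some PODWA. -/
/-! If the weight of every transition is the increment of a function `φ` on the states, the weights
along a run telescope to a difference of two values of `φ`. In the tree of all prefixes of the
sample words, reading a word from the root leads to the node which is that word, so there `φ` can
be prescribed freely on the sample, apart from the normalisation `φ [] = 0`. -/

theorem DWA.valFrom_eq_sub {A Q : Type} {M : DWA A Q} {φ : Q → ℤ}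
    (hc : ∀ q x, M.c q x = φ (M.δ q x) - φ q) (q : Q) (w : List A) :
    M.valFrom q w = φ (M.run q w) - φ q := by
  induction w generalizing q with
  | nil => exact (sub_self (φ q)).symm
  | cons x w ih =>
    calc M.valFrom q (x :: w)
        = (φ (M.δ q x) - φ q) + (φ (M.run (M.δ q x) w) - φ (M.δ q x)) := by
          rw [DWA.valFrom, hc, ih]
      _ = φ (M.run (M.δ q x) w) - φ q := by ring

section TreeDWA

variable {A : Type} {T : Descriptive.tree A}

open Classical in
/-- The automaton that walks down the tree `T` of words as it reads its input, the weight of a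
step being the increment of `f`. Where the walk would leave `T` it stays put, so that the
transition function is total. -/
noncomputable def treeDWA (hT : [] ∈ T) (f : List A → ℤ) : DWA A T :=
  let step (p : T) (x : A) : T := if h : p.1 ++ [x] ∈ T then ⟨p.1 ++ [x], h⟩ else p
  { init := ⟨[], hT⟩
    δ := step
    c := fun p x => f (step p x) - f p }

theorem treeDWA_run_init (hT : [] ∈ T) (f : List A → ℤ) {w : List A} (hw : w ∈ T) :
    (treeDWA hT f).run (treeDWA hT f).init w = ⟨w, hw⟩ := by
  induction w using List.reverseRecOn with
  | nil => rfl
  | append_singleton w x ih =>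
    have run_w := ih (Descriptive.Tree.mem_of_append hw)
    rw [DWA.run] at run_w ⊢
    rw [List.foldl_concat, run_w]
    exact dif_pos hw

theorem treeDWA_val (hT : [] ∈ T) (f : List A → ℤ) {w : List A} (hw : w ∈ T) :
    (treeDWA hT f).val w = f w - f [] := by
  rw [DWA.val, DWA.valFrom_eq_sub (φ := fun p : T => f p) (fun _ _ => rfl),
    treeDWA_run_init hT f hw]
  rfl

end TreeDWA

/-- The tree of all prefixes of the words in `W`, the least tree containing `W`. -/
def prefixTree {A : Type*} (W : Set (List A)) : Descriptive.tree A :=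
  ⟨{p | ∃ w ∈ W, p <+: w}, fun p x ⟨w, hw, hp⟩ => ⟨w, hw, (p.prefix_append [x]).trans hp⟩⟩

theorem mem_prefixTree_of_mem {A : Type*} {W : Set (List A)} {w : List A} (hw : w ∈ W) :
    w ∈ prefixTree W :=
  ⟨w, hw, w.prefix_refl⟩

theorem finite_prefixTree {A : Type*} {W : Set (List A)} (hW : W.Finite) :
    Finite (prefixTree W) := by
  have finite_inits : (⋃ w ∈ W, {p | p ∈ w.inits}).Finite :=
    hW.biUnion fun w _ => w.inits.finite_toSet
  refine (finite_inits.subset ?_).to_subtype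
  rintro p ⟨w, hw, hp⟩
  exact Set.mem_biUnion hw ((List.mem_inits p w).2 hp)

theorem exists_finite_dwa_val_eq {A : Type} {W : Set (List A)} (hW : W.Finite)
    {f : List A → ℤ} (hf : f [] = 0) :
    ∃ (Q : Type) (_ : Fintype Q) (M : DWA A Q), ∀ w ∈ W, M.val w = f w := by
  have := finite_prefixTree (hW.insert [])
  have nil_mem : [] ∈ prefixTree (insert [] W) := mem_prefixTree_of_mem (Set.mem_insert _ _)
  refine ⟨prefixTree (insert [] W), Fintype.ofFinite _, treeDWA nil_mem f, fun w hw => ?_⟩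
  rw [treeDWA_val nil_mem f (mem_prefixTree_of_mem (Set.mem_insert_of_mem _ hw)), hf, sub_zero]

theorem sample_fitting_always_possible_general {A : Type} (W : Finset (List A))
    (hW : ∀ w ∈ W, w ≠ []) (g : List A → Set ℤ) (hg : ∀ w ∈ W, (g w).Nonempty) :
    ∃ (Q : Type) (_ : Fintype Q) (M : DWA A Q), ∀ w ∈ W, M.val w ∈ g w := by
  classical
  let f (w : List A) : ℤ := if hw : w ∈ W then (hg w hw).some else 0
  have f_nil : f [] = 0 := dif_neg fun h => hW [] h rfl
  have f_mem : ∀ w ∈ W, f w ∈ g w := fun w hw => by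
    simpa only [f, dif_pos hw] using (hg w hw).some_mem
  obtain ⟨Q, hQ, M, hM⟩ := exists_finite_dwa_val_eq W.finite_toSet f_nil
  exact ⟨Q, hQ, M, fun w hw => (hM w hw).symm ▸ f_mem w hw⟩

/-- every finite sample is consistent with some PODWA. Given a finite set `S`
of pairwise-disjoint nonempty integer intervals covering `ℤ` (intervals are modelled as
nonempty order-connected subsets of `ℤ`), a finite set `W` of nonempty words, and an
assignment `g` of an interval of `S` to each word of `W`, there is a (finite-state) DWA `M`
whose value on each `w ∈ W` lies in the interval `g w`. -/
theorem sample_fitting_always_possible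
    (A : Type) [Fintype A] [Nonempty A]
    (S : Finset (Set ℤ))
    (hne : ∀ s ∈ S, s.Nonempty)
    (hconn : ∀ s ∈ S, s.OrdConnected)
    (hdisj : ∀ s ∈ S, ∀ t ∈ S, s ≠ t → s ∩ t = ∅)
    (hcover : ⋃ s ∈ S, s = Set.univ)
    (W : Finset (List A)) (hW : ∀ w ∈ W, w ≠ [])
    (g : List A → Set ℤ) (hg : ∀ w ∈ W, g w ∈ S) :
    ∃ (Q : Type) (_ : Fintype Q) (M : DWA A Q),
      ∀ w ∈ W, M.val w ∈ g w := by
  exact sample_fitting_always_possible_general W hW g fun w hw => hne _ (hg w hw)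
end
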